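/- Let f be a standard solution family, set α = e^{iπ/10}, ψ₊(z,λ) = f(α·z, −α^{−2}·λ) and ψ₋(z,λ) = f(−α^{−1}·z, −α²·λ). Then λ ∈ ℂ is an eigenvalue of the imaginary cubic oscillator if and only if there exists γ ∈ ℂ such that ψ₋(z,λ) = γ·ψ₊(z,λ) for all z ∈ ℂ. -/

import Mathlib

open Complex MeasureTheory

/-- `lam` is an eigenvalue of the imaginary cubic oscillator `H = p² + i x³`. -/
def IsEigenvalueICO (lam : ℂ) : Prop :=
  ∃ ψ : ℝ → ℂ, ψ ≠ 0 ∧ ContDiff ℝ 2 ψ ∧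
    Integrable (fun x : ℝ => ‖ψ x‖ ^ 2) ∧
    ∀ x : ℝ, -(deriv (deriv ψ) x) + Complex.I * (x : ℂ) ^ 3 * ψ x = lam * ψ x

/-- `f : ℂ × ℂ → ℂ` is a standard solution family for `f'' = (z³ + λ) f`:
for each `λ` the map `z ↦ f(z,λ)` is entire and solves the ODE, and it has the
Liouville–Green asymptotics `f(z,λ) = z^{-3/4} e^{-(2/5) z^{5/2}} (1 + O(z^{-1/2}))`
as `z → ∞` in the sector `|arg z| ≤ 3π/5 - ε`, uniformly for `λ` in compact sets. -/
def IsStdSolutionFamily (f : ℂ → ℂ → ℂ) : Prop :=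
  (∀ lam : ℂ, Differentiable ℂ (fun z => f z lam) ∧
    ∀ z : ℂ, deriv (deriv (fun w => f w lam)) z = (z ^ 3 + lam) * f z lam) ∧
  (∀ ε > (0 : ℝ), ∀ L : Set ℂ, IsCompact L →
    ∃ C > (0 : ℝ), ∃ R > (0 : ℝ), ∀ lam ∈ L, ∀ z : ℂ,
      R ≤ ‖z‖ → |Complex.arg z| ≤ 3 * Real.pi / 5 - ε →
      ‖(f z lam * z ^ ((3 : ℂ) / 4) *
          Complex.exp ((2 / 5 : ℂ) * z ^ ((5 : ℂ) / 2)) - 1)‖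
        ≤ C * ‖z‖ ^ (-(1 / 2) : ℝ))

theorem sector_bound (f : ℂ → ℂ → ℂ) (hf : IsStdSolutionFamily f) (mu : ℂ) :
    ∃ c > (0 : ℝ), ∃ R > (0 : ℝ), ∀ z : ℂ, R ≤ ‖z‖ → |Complex.arg z| ≤ 3 * Real.pi / 20 →
      f z mu ≠ 0 ∧ ‖f z mu‖ ≤ 2 * Real.exp (-c * ‖z‖) := by
  have hpi := Real.pi_pos
  obtain ⟨C, hC, R, hR, h⟩ := hf.2 (9 * Real.pi / 20) (by positivity) {mu} isCompact_singleton
  have hcos : 0 < Real.cos (3 * Real.pi / 8) :=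
    Real.cos_pos_of_mem_Ioo ⟨by linarith, by linarith⟩
  refine ⟨2 / 5 * Real.cos (3 * Real.pi / 8), by positivity, max (max R 1) (4 * C ^ 2),
    by positivity, fun z hz harg => ?_⟩
  have hzR : R ≤ ‖z‖ := le_trans (le_trans (le_max_left _ _) (le_max_left _ _)) hz
  have hz1 : 1 ≤ ‖z‖ := le_trans (le_trans (le_max_right _ _) (le_max_left _ _)) hz
  have hzC : 4 * C ^ 2 ≤ ‖z‖ := le_trans (le_max_right _ _) hz
  have hz0 : z ≠ 0 := by
    rintro rfl
    simp at hz1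
    linarith
  have key := h mu rfl z hzR (by linarith)
  have hsmall : C * ‖z‖ ^ (-(1 / 2) : ℝ) ≤ 1 / 2 := by
    have h0 : 0 < ‖z‖ := by linarith
    rw [Real.rpow_neg h0.le, ← Real.sqrt_eq_rpow]
    have hs : 2 * C ≤ Real.sqrt ‖z‖ := Real.le_sqrt_of_sq_le (by nlinarith)
    have hs0 : 0 < Real.sqrt ‖z‖ := Real.sqrt_pos.2 h0
    rw [← div_eq_mul_inv, div_le_iff₀ hs0]
    linarith
  set P := z ^ ((3 : ℂ) / 4) with hP
  set E := Complex.exp ((2 / 5 : ℂ) * z ^ ((5 : ℂ) / 2)) with hE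
  have hkey : ‖f z mu * P * E - 1‖ ≤ 1 / 2 := key.trans hsmall
  have hPn : 1 ≤ ‖P‖ := by
    rw [hP, Complex.cpow_def_of_ne_zero hz0, Complex.norm_exp]
    apply Real.one_le_exp
    have : (Complex.log z * (3 / 4)).re = Real.log ‖z‖ * (3 / 4) := by
      rw [show (3 / 4 : ℂ) = ((3 / 4 : ℝ) : ℂ) by push_cast; rfl, Complex.re_mul_ofReal,
        Complex.log_re]
    rw [this]
    have := Real.log_nonneg hz1
    positivity
  have hEn : Real.exp (2 / 5 * Real.cos (3 * Real.pi / 8) * ‖z‖) ≤ ‖E‖ := by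
    rw [hE, Complex.norm_exp]
    apply Real.exp_le_exp.2
    rw [show (2 / 5 : ℂ) = ((2 / 5 : ℝ) : ℂ) by push_cast; rfl, Complex.re_ofReal_mul,
      Complex.cpow_def_of_ne_zero hz0, Complex.exp_re,
      show (5 / 2 : ℂ) = ((5 / 2 : ℝ) : ℂ) by push_cast; rfl, Complex.re_mul_ofReal,
      Complex.im_mul_ofReal, Complex.log_re, Complex.log_im]
    have h1 : ‖z‖ ≤ Real.exp (Real.log ‖z‖ * (5 / 2)) := by
      calc ‖z‖ = Real.exp (Real.log ‖z‖) := (Real.exp_log (by linarith)).symm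
        _ ≤ _ := Real.exp_le_exp.2 (by nlinarith [Real.log_nonneg hz1])
    have h2 : Real.cos (3 * Real.pi / 8) ≤ Real.cos (z.arg * (5 / 2)) := by
      rw [← Real.cos_abs (z.arg * (5 / 2))]
      have : |z.arg * (5 / 2)| = |z.arg| * (5 / 2) := by
        rw [abs_mul, abs_of_pos (by norm_num : (0 : ℝ) < 5 / 2)]
      rw [this]
      apply Real.cos_le_cos_of_nonneg_of_le_pi
      · positivity
      · linarith
      · linarith
    have h3 : Real.cos (3 * Real.pi / 8) * ‖z‖ ≤
        Real.cos (z.arg * (5 / 2)) * Real.exp (Real.log ‖z‖ * (5 / 2)) :=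
      mul_le_mul h2 h1 (norm_nonneg _) (hcos.le.trans h2)
    linarith
  constructor
  · intro h0
    rw [h0] at hkey
    norm_num at hkey
  · have h4 : ‖f z mu * P * E‖ ≤ 2 := by
      have := norm_add_le (f z mu * P * E - 1) 1
      simp only [sub_add_cancel, norm_one] at this
      linarith
    rw [norm_mul, norm_mul] at h4
    have hexp := Real.exp_pos (2 / 5 * Real.cos (3 * Real.pi / 8) * ‖z‖)
    rw [neg_mul, Real.exp_neg, ← div_eq_mul_inv, le_div_iff₀ hexp]
    refine le_trans ?_ h4
    have h5 : ‖f z mu‖ ≤ ‖f z mu‖ * ‖P‖ := le_mul_of_one_le_right (norm_nonneg _) hPn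
    exact mul_le_mul h5 hEn hexp.le (by positivity)

theorem ray_bound (f : ℂ → ℂ → ℂ) (hf : IsStdSolutionFamily f) (mu a : ℂ)
    (ha : ‖a‖ = 1) (harg : |Complex.arg a| < 3 * Real.pi / 20) :
    ∃ C > (0 : ℝ), ∃ c > (0 : ℝ), ∃ R > (0 : ℝ), ∀ x : ℝ, R ≤ x →
      f (a * x) mu ≠ 0 ∧ ‖f (a * x) mu‖ ≤ C * Real.exp (-c * x) ∧
      ‖deriv (fun w => f w mu) (a * x)‖ ≤ C * Real.exp (-c * x) := by
  have hpi := Real.pi_pos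
  obtain ⟨c, hc, R, hR, h⟩ := sector_bound f hf mu
  have ha0 : a ≠ 0 := by
    rintro rfl
    simp at ha
  have hslit : a ∈ Complex.slitPlane := by
    rw [Complex.mem_slitPlane_iff_arg]
    refine ⟨fun h => ?_, ha0⟩
    rw [h, abs_of_pos hpi] at harg
    linarith
  have hev : ∀ᶠ w in nhds a, |Complex.arg w| < 3 * Real.pi / 20 :=
    ((Complex.continuousAt_arg hslit).abs).eventually (gt_mem_nhds harg)
  obtain ⟨d, hd, hball⟩ := Metric.eventually_nhds_iff.1 hev
  set e : ℝ := min (d / 2) (1 / 2) with he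
  have he0 : 0 < e := by positivity
  have hed : e < d := lt_of_le_of_lt (min_le_left _ _) (by linarith)
  have heh : e ≤ 1 / 2 := min_le_right _ _
  have main : ∀ x : ℝ, 2 * R + 1 ≤ x → ∀ w : ℂ, ‖w - a * x‖ ≤ e * x →
      f w mu ≠ 0 ∧ ‖f w mu‖ ≤ 2 * Real.exp (-(c / 2) * x) := by
    intro x hx w hw
    have hx0 : 0 < x := by linarith
    have hnorm : x / 2 ≤ ‖w‖ := by
      have h1 : ‖a * (x : ℂ)‖ = x := by
        rw [norm_mul, ha, one_mul, Complex.norm_real, Real.norm_of_nonneg hx0.le]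
      have h2 := norm_sub_norm_le (a * (x : ℂ)) (a * x - w)
      rw [norm_sub_rev (a * (x : ℂ)) w, h1, sub_sub_cancel] at h2
      nlinarith
    have harg' : |Complex.arg w| < 3 * Real.pi / 20 := by
      have hxc : (x : ℂ) ≠ 0 := by exact_mod_cast hx0.ne'
      have hw' : w = (x : ℂ) * (w / x) := by field_simp
      rw [hw', Complex.arg_real_mul _ hx0]
      apply hball
      rw [dist_eq_norm]
      have : w / x - a = (w - a * x) / x := by field_simp
      rw [this, norm_div, Complex.norm_real, Real.norm_of_nonneg hx0.le, div_lt_iff₀ hx0]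
      nlinarith
    obtain ⟨h1, h2⟩ := h w (by linarith) harg'.le
    refine ⟨h1, h2.trans ?_⟩
    have h3 : -c * ‖w‖ ≤ -(c / 2) * x := by nlinarith
    have h4 := Real.exp_le_exp.2 h3
    linarith
  refine ⟨2 / e + 2, by positivity, c / 2, by positivity, 2 * R + 1, by positivity, fun x hx => ?_⟩
  have hx0 : 0 < x := by linarith
  have hx1 : 1 ≤ x := by linarith
  have hE := Real.exp_pos (-(c / 2) * x)
  obtain ⟨h1, h2⟩ := main x hx (a * x) (by simp; positivity)
  have h2e : 0 < 2 / e := by positivity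
  refine ⟨h1, h2.trans ?_, ?_⟩
  · gcongr
    linarith
  · have := Complex.norm_deriv_le_of_forall_mem_sphere_norm_le (f := fun w => f w mu)
      (c := a * x) (R := e * x) (C := 2 * Real.exp (-(c / 2) * x)) (by positivity)
      (hf.1 mu).1.diffContOnCl (fun z hz => (main x hx z (by
        rw [mem_sphere_iff_norm] at hz
        exact hz.le)).2)
    refine this.trans ?_
    rw [div_le_iff₀ (by positivity)]
    have : (2 / e + 2) * Real.exp (-(c / 2) * x) * (e * x)
      = 2 * Real.exp (-(c / 2) * x) * x + 2 * Real.exp (-(c / 2) * x) * (e * x) := by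
      field_simp
    rw [this]
    have h3 : 2 * Real.exp (-(c / 2) * x) ≤ 2 * Real.exp (-(c / 2) * x) * x :=
      le_mul_of_one_le_right (by positivity) hx1
    have : 0 ≤ 2 * Real.exp (-(c / 2) * x) * (e * x) := by positivity
    linarith

theorem integrable_exp_sq (C c R : ℝ) (hc : 0 < c) :
    IntegrableOn (fun x : ℝ => (C * Real.exp (-c * x)) ^ 2) (Set.Ioi R) := by
  have := (exp_neg_integrableOn_Ioi R (b := 2 * c) (by positivity)).const_mul (C ^ 2)
  refine this.congr (Filter.Eventually.of_forall fun x => ?_)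
  simp only []
  rw [mul_pow, ← Real.exp_nat_mul]
  congr 2
  push_cast
  ring

theorem wronskian_zero (q ψ ψ' φ φ' : ℝ → ℂ)
    (h1 : ∀ x, HasDerivAt ψ (ψ' x) x) (h2 : ∀ x, HasDerivAt ψ' (q x * ψ x) x)
    (h3 : ∀ x, HasDerivAt φ (φ' x) x) (h4 : ∀ x, HasDerivAt φ' (q x * φ x) x)
    (hi : Integrable (fun x : ℝ => ‖ψ x‖ ^ 2))
    (C c R : ℝ) (hc : 0 < c)
    (hb : ∀ x, R ≤ x → ‖φ x‖ ≤ C * Real.exp (-c * x))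
    (hb' : ∀ x, R ≤ x → ‖φ' x‖ ≤ C * Real.exp (-c * x)) (x : ℝ) :
    ψ x * φ' x - ψ' x * φ x = 0 := by
  have hW : ∀ y, HasDerivAt (fun x => ψ x * φ' x - ψ' x * φ x) 0 y := by
    intro y
    have := ((h1 y).mul (h4 y)).sub ((h2 y).mul (h3 y))
    refine this.congr_deriv ?_
    ring
  have hconst : ∀ y, ψ y * φ' y - ψ' y * φ y = ψ x * φ' x - ψ' x * φ x := fun y =>
    is_const_of_deriv_eq_zero (fun z => (hW z).differentiableAt) (fun z => (hW z).deriv) y x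
  set W := ψ x * φ' x - ψ' x * φ x with hWdef
  have cψ : Continuous ψ := continuous_iff_continuousAt.2 fun x => (h1 x).continuousAt
  have cφ : Continuous φ := continuous_iff_continuousAt.2 fun x => (h3 x).continuousAt
  have cφ' : Continuous φ' := continuous_iff_continuousAt.2 fun x => (h4 x).continuousAt
  have hdom : IntegrableOn (fun x : ℝ => ‖ψ x‖ ^ 2 + (C * Real.exp (-c * x)) ^ 2) (Set.Ioi R) :=
    hi.integrableOn.add (integrable_exp_sq C c R hc)
  have hmul : ∀ u : ℝ → ℂ, Continuous u → (∀ x, R ≤ x → ‖u x‖ ≤ C * Real.exp (-c * x)) →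
      IntegrableOn (fun x => ψ x * u x) (Set.Ioi R) := by
    intro u cu hu
    refine Integrable.mono' hdom (cψ.mul cu).aestronglyMeasurable ?_
    refine (ae_restrict_iff' measurableSet_Ioi).2 (Filter.Eventually.of_forall fun y hy => ?_)
    have := hu y (le_of_lt hy)
    rw [norm_mul]
    nlinarith [norm_nonneg (ψ y), norm_nonneg (u y), sq_nonneg (‖ψ y‖ - C * Real.exp (-c * y)),
      sq_nonneg (‖ψ y‖), sq_nonneg (C * Real.exp (-c * y))]
  have hg := hmul φ cφ hb
  have hg' := hmul φ' cφ' hb'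
  by_contra hne
  have hWpos : 0 < ‖W‖ := norm_pos_iff.2 hne
  set K := ∫ y in Set.Ioi R, ‖2 * (ψ y * φ' y)‖ with hK
  have hlow : ∀ y, R ≤ y → ‖W‖ * (y - R) - K - ‖ψ R * φ R‖ ≤ ‖ψ y * φ y‖ := by
    intro y hy
    have hder : ∀ t, HasDerivAt (fun t : ℝ => ψ t * φ t + W * ((t : ℂ))) (2 * (ψ t * φ' t)) t := by
      intro t
      have := ((h1 t).mul (h3 t)).add ((Complex.ofRealCLM.hasDerivAt (x := t)).const_mul W)
      refine this.congr_deriv ?_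
      have := hconst t
      simp only [Complex.ofRealCLM_apply, Complex.ofReal_one, mul_one]
      rw [← this]
      ring
    have hint := intervalIntegral.integral_eq_sub_of_hasDerivAt (a := R) (b := y)
      (fun t _ => hder t)
      ((continuous_const.mul (cψ.mul cφ')).intervalIntegrable _ _)
    have hKb : ‖∫ t in R..y, 2 * (ψ t * φ' t)‖ ≤ K := by
      refine (intervalIntegral.norm_integral_le_integral_norm hy).trans ?_
      rw [intervalIntegral.integral_of_le hy]
      refine setIntegral_mono_set (hg'.const_mul 2).norm
        (Filter.Eventually.of_forall fun _ => norm_nonneg _) ?_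
      exact Filter.Eventually.of_forall Set.Ioc_subset_Ioi_self
    rw [hint] at hKb
    have e1 : W * ((y : ℂ) - R) = (ψ y * φ y + W * (y : ℂ) - (ψ R * φ R + W * (R : ℂ)))
        + ψ R * φ R - ψ y * φ y := by ring
    have e2 : ‖W * ((y : ℂ) - R)‖ = ‖W‖ * (y - R) := by
      rw [norm_mul, ← Complex.ofReal_sub, Complex.norm_real, Real.norm_of_nonneg (by linarith)]
    rw [← e2, e1]
    have n1 := norm_sub_le ((ψ y * φ y + W * (y : ℂ) - (ψ R * φ R + W * (R : ℂ)))
        + ψ R * φ R) (ψ y * φ y)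
    have n2 := norm_add_le (ψ y * φ y + W * (y : ℂ) - (ψ R * φ R + W * (R : ℂ))) (ψ R * φ R)
    linarith
  have hK0 : 0 ≤ K := integral_nonneg fun _ => norm_nonneg _
  set R2 := R + (K + ‖ψ R * φ R‖ + 1) / ‖W‖ with hR2
  have hRR : R ≤ R2 := by
    have : 0 ≤ (K + ‖ψ R * φ R‖ + 1) / ‖W‖ := by positivity
    linarith
  have hone : IntegrableOn (fun _ : ℝ => (1 : ℝ)) (Set.Ioi R2) := by
    refine Integrable.mono' (hg.mono_set (Set.Ioi_subset_Ioi hRR)).norm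
      aestronglyMeasurable_const ?_
    refine (ae_restrict_iff' measurableSet_Ioi).2 (Filter.Eventually.of_forall fun y hy => ?_)
    have hy : R2 < y := hy
    have h5 := hlow y (by linarith)
    have h6 : (K + ‖ψ R * φ R‖ + 1) / ‖W‖ ≤ y - R := by linarith
    rw [div_le_iff₀ hWpos] at h6
    simp only [norm_one]
    linarith
  rw [integrableOn_const_iff] at hone
  simp at hone

theorem ode_zero (q h h' : ℝ → ℂ) (hq : Continuous q)
    (h1 : ∀ x, HasDerivAt h (h' x) x) (h2 : ∀ x, HasDerivAt h' (q x * h x) x)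
    (x0 : ℝ) (hx : h x0 = 0) (hx' : h' x0 = 0) (x : ℝ) : h x = 0 := by
  obtain ⟨M, hM⟩ : ∃ M : ℝ, ∀ t ∈ Set.Icc (min x x0 - 1) (max x x0 + 1), ‖q t‖ ≤ M :=
    isCompact_Icc.exists_bound_of_continuousOn hq.continuousOn
  have key := ODE_solution_unique_of_mem_Ioo (E := ℂ × ℂ) (a := min x x0 - 1) (b := max x x0 + 1)
    (v := fun t u => (u.2, q t * u.1)) (s := fun _ => Set.univ) (K := max 1 (Real.toNNReal M))
    (f := fun t => (h t, h' t)) (g := fun _ => (0, 0)) (t₀ := x0) ?_ ?_ ?_ ?_ ?_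
  · have := key (x := x) ⟨by linarith [min_le_left x x0], by linarith [le_max_left x x0]⟩
    simpa using congrArg Prod.fst this
  · intro t ht
    have hMt := hM t (Set.Ioo_subset_Icc_self ht)
    refine LipschitzWith.lipschitzOnWith (LipschitzWith.of_dist_le_mul fun u w => ?_)
    rw [Prod.dist_eq, Prod.dist_eq]
    have hM0 : 0 ≤ M := (norm_nonneg _).trans hMt
    push_cast
    rw [Real.coe_toNNReal M hM0]
    simp only [dist_eq_norm, ← mul_sub, norm_mul]
    apply max_le
    · calc ‖u.2 - w.2‖ ≤ 1 * max ‖u.1 - w.1‖ ‖u.2 - w.2‖ := by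
            rw [one_mul]; exact le_max_right _ _
        _ ≤ _ := by gcongr; exact le_max_left _ _
    · apply mul_le_mul (hMt.trans (le_max_right _ _)) (le_max_left _ _) (norm_nonneg _)
      positivity
  · exact ⟨by linarith [min_le_right x x0], by linarith [le_max_right x x0]⟩
  · exact fun t _ => ⟨(h1 t).prodMk (h2 t), trivial⟩
  · intro t _
    refine ⟨?_, trivial⟩
    simp only [mul_zero]
    exact hasDerivAt_const t ((0 : ℂ), (0 : ℂ))
  · simp [hx, hx']

theorem prop_of_wronskian (q ψ ψ' φ φ' : ℝ → ℂ) (hq : Continuous q)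
    (h1 : ∀ x, HasDerivAt ψ (ψ' x) x) (h2 : ∀ x, HasDerivAt ψ' (q x * ψ x) x)
    (h3 : ∀ x, HasDerivAt φ (φ' x) x) (h4 : ∀ x, HasDerivAt φ' (q x * φ x) x)
    (hW : ∀ x, ψ x * φ' x - ψ' x * φ x = 0) (x0 : ℝ) (hx0 : φ x0 ≠ 0) :
    ∃ a : ℂ, ∀ x, ψ x = a * φ x := by
  refine ⟨ψ x0 / φ x0, fun x => sub_eq_zero.1 ?_⟩
  refine ode_zero q (fun x => ψ x - ψ x0 / φ x0 * φ x) (fun x => ψ' x - ψ x0 / φ x0 * φ' x) hq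
    (fun x => (h1 x).sub ((h3 x).const_mul _)) (fun x => ?_) x0 ?_ ?_ x
  · refine ((h2 x).sub ((h4 x).const_mul _)).congr_deriv ?_
    ring
  · field_simp
    ring
  · have := hW x0
    field_simp
    linear_combination -this

theorem ray_deriv (f : ℂ → ℂ → ℂ) (hf : IsStdSolutionFamily f) (mu b : ℂ) (x : ℝ) :
    HasDerivAt (fun x : ℝ => f (b * x) mu) (b * deriv (fun w => f w mu) (b * x)) x ∧
    HasDerivAt (fun x : ℝ => b * deriv (fun w => f w mu) (b * x))
      (b ^ 2 * ((b * x) ^ 3 + mu) * f (b * x) mu) x := by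
  obtain ⟨hd, hode⟩ := hf.1 mu
  have hlin : HasDerivAt (fun x : ℝ => b * (x : ℂ)) b x := by
    simpa using (Complex.ofRealCLM.hasDerivAt (x := x)).const_mul b
  constructor
  · have := HasDerivAt.comp x (hd (b * x)).hasDerivAt hlin
    exact this.congr_deriv (mul_comm _ _)
  · have hd2 : Differentiable ℂ (deriv (fun w => f w mu)) := by
      have : ContDiff ℂ 2 (fun w => f w mu) := hd.contDiff
      exact (((contDiff_succ_iff_deriv (n := 1)).1 this).2.2).differentiable (by norm_num)
    have h := (HasDerivAt.comp x (hd2 (b * x)).hasDerivAt hlin).const_mul b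
    refine h.congr_deriv ?_
    rw [hode]
    ring

/-- `λ` is an eigenvalue iff the two normalizable solutions
`ψ₊(z,λ) = f(αz, -α⁻²λ)` and `ψ₋(z,λ) = f(-α⁻¹z, -α²λ)` (with `α = e^{iπ/10}`)
are proportional. -/
theorem eigenvalue_iff_proportional (f : ℂ → ℂ → ℂ) (hf : IsStdSolutionFamily f)
    (α : ℂ) (hα : α = Complex.exp (Real.pi * Complex.I / 10))
    (ψp ψm : ℂ → ℂ → ℂ)
    (hψp : ψp = fun z lam => f (α * z) (-(α ^ 2)⁻¹ * lam))
    (hψm : ψm = fun z lam => f (-α⁻¹ * z) (-α ^ 2 * lam))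
    (lam : ℂ) :
    IsEigenvalueICO lam ↔ ∃ γ : ℂ, ∀ z : ℂ, ψm z lam = γ * ψp z lam := by
  have hpi := Real.pi_pos
  have hα0 : α ≠ 0 := by rw [hα]; exact Complex.exp_ne_zero _
  have hα5 : α ^ 5 = Complex.I := by
    rw [hα, ← Complex.exp_nat_mul,
      show ((5 : ℕ) : ℂ) * (Real.pi * Complex.I / 10) = Real.pi / 2 * Complex.I by push_cast; ring,
      Complex.exp_pi_div_two_mul_I]
  have hα' : α = Complex.exp ((Real.pi / 10 : ℝ) * Complex.I) := by
    rw [hα]; congr 1; push_cast; ring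
  have hαi : α⁻¹ = Complex.exp ((-(Real.pi / 10) : ℝ) * Complex.I) := by
    rw [hα', ← Complex.exp_neg]; congr 1; push_cast; ring
  have hn : ‖α‖ = 1 := by rw [hα', Complex.norm_exp_ofReal_mul_I]
  have hni : ‖α⁻¹‖ = 1 := by rw [norm_inv, hn, inv_one]
  have harg : |Complex.arg α| < 3 * Real.pi / 20 := by
    rw [hα', Complex.arg_exp_mul_I, (toIocMod_eq_self _).2 ⟨by linarith, by linarith⟩,
      abs_of_pos (by positivity)]
    linarith
  have hargi : |Complex.arg α⁻¹| < 3 * Real.pi / 20 := by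
    rw [hαi, Complex.arg_exp_mul_I, (toIocMod_eq_self _).2 ⟨by linarith, by linarith⟩,
      abs_neg, abs_of_pos (by positivity)]
    linarith
  set mp := -(α ^ 2)⁻¹ * lam with hmp
  set mm := -α ^ 2 * lam with hmm
  obtain ⟨Cp, hCp, cp, hcp, Rp, hRp, hp⟩ := ray_bound f hf mp α hn harg
  obtain ⟨Cm, hCm, cm, hcm, Rm, hRm, hm⟩ := ray_bound f hf mm α⁻¹ hni hargi
  have dp := ray_deriv f hf mp α
  have dm := ray_deriv f hf mm (-α⁻¹)
  have dmr := ray_deriv f hf mm α⁻¹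
  have qp : ∀ x : ℂ, α ^ 2 * ((α * x) ^ 3 + mp) = Complex.I * x ^ 3 - lam := by
    intro x
    rw [hmp, ← hα5]
    field_simp
    try ring
  have hinv5 : (α⁻¹) ^ 5 = -Complex.I := by rw [inv_pow, hα5, Complex.inv_I]
  have qm0 : ∀ x : ℂ, (α⁻¹) ^ 2 * ((α⁻¹ * x) ^ 3 + mm) = -Complex.I * x ^ 3 - lam := by
    intro x
    rw [hmm, ← hinv5]
    field_simp
    try ring
  have qm : ∀ x : ℂ, (-α⁻¹) ^ 2 * ((-α⁻¹ * x) ^ 3 + mm) = Complex.I * x ^ 3 - lam := by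
    intro x
    have := qm0 (-x)
    rw [neg_sq, neg_mul, ← mul_neg, this]
    ring
  have hq : Continuous fun x : ℝ => Complex.I * (x : ℂ) ^ 3 - lam := by fun_prop
  have hψp' : ∀ z, ψp z lam = f (α * z) mp := fun z => by rw [hψp]
  have hψm' : ∀ z, ψm z lam = f (-α⁻¹ * z) mm := fun z => by rw [hψm]
  simp only [hψp', hψm']
  constructor
  · rintro ⟨ψ, hne, hC2, hint, hode⟩
    have h1 : ∀ x, HasDerivAt ψ (deriv ψ x) x := fun x =>
      (hC2.differentiable (by norm_num) x).hasDerivAt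
    have h2 : ∀ x : ℝ, HasDerivAt (deriv ψ) ((Complex.I * (x : ℂ) ^ 3 - lam) * ψ x) x := by
      intro x
      have hdd : Differentiable ℝ (deriv ψ) :=
        (((contDiff_succ_iff_deriv (n := 1)).1 hC2).2.2).differentiable (by norm_num)
      refine (hdd x).hasDerivAt.congr_deriv ?_
      linear_combination -hode x
    have h3 := fun x => (dp x).1
    have h4 := fun x => (dp x).2
    simp only [qp] at h4
    have hbd : ∀ (a : ℂ) (_ : ‖a‖ = 1) (v : ℂ) (B : ℝ), ‖v‖ ≤ B → ‖a * v‖ ≤ B := by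
      intro a ha v B h
      rwa [norm_mul, ha, one_mul]
    have hWp := wronskian_zero _ ψ _ _ _ h1 h2 h3 h4 hint Cp cp Rp hcp
      (fun x hx => (hp x hx).2.1) (fun x hx => hbd _ hn _ _ (hp x hx).2.2)
    obtain ⟨a, ha⟩ := prop_of_wronskian _ ψ _ _ _ hq h1 h2 h3 h4 hWp Rp (hp Rp le_rfl).1
    -- reflected problem
    have r1 : ∀ x : ℝ, HasDerivAt (fun x => ψ (-x)) (-deriv ψ (-x)) x := by
      intro x
      have := HasDerivAt.scomp x (h1 (-x)) (hasDerivAt_neg x)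
      exact this.congr_deriv (by simp)
    have r2 : ∀ x : ℝ, HasDerivAt (fun x => -deriv ψ (-x))
        ((-Complex.I * (x : ℂ) ^ 3 - lam) * ψ (-x)) x := by
      intro x
      have := (HasDerivAt.scomp x (h2 (-x)) (hasDerivAt_neg x)).neg
      refine this.congr_deriv ?_
      simp only [neg_smul, one_smul, neg_neg]
      push_cast
      ring
    have r3 := fun x => (dmr x).1
    have r4 := fun x => (dmr x).2
    simp only [qm0] at r4
    have hqr : Continuous fun x : ℝ => -Complex.I * (x : ℂ) ^ 3 - lam := by fun_prop
    have hWm := wronskian_zero _ (fun x => ψ (-x)) _ _ _ r1 r2 r3 r4 hint.comp_neg Cm cm Rm hcm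
      (fun x hx => (hm x hx).2.1) (fun x hx => hbd _ hni _ _ (hm x hx).2.2)
    obtain ⟨b, hb⟩ := prop_of_wronskian _ (fun x => ψ (-x)) _ _ _ hqr r1 r2 r3 r4 hWm Rm
      (hm Rm le_rfl).1
    have hb0 : b ≠ 0 := by
      rintro rfl
      apply hne
      funext x
      have := hb (-x)
      simpa using this
    refine ⟨a / b, fun z => ?_⟩
    have hreal : ∀ x : ℝ, f (-α⁻¹ * x) mm = a / b * f (α * x) mp := by
      intro x
      have e1 := ha x
      have e2 := hb (-x)
      simp only [neg_neg] at e2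
      have e3 : α⁻¹ * ((-x : ℝ) : ℂ) = -α⁻¹ * x := by push_cast; ring
      rw [e1, e3] at e2
      field_simp at e2 ⊢
      exact e2.symm
    have an1 : AnalyticOnNhd ℂ (fun z => f (-α⁻¹ * z) mm) Set.univ := by
      have : Differentiable ℂ (fun z => f (-α⁻¹ * z) mm) :=
        (hf.1 mm).1.comp (differentiable_id.const_mul (-α⁻¹))
      exact this.differentiableOn.analyticOnNhd isOpen_univ
    have an2 : AnalyticOnNhd ℂ (fun z => a / b * f (α * z) mp) Set.univ := by
      have : Differentiable ℂ (fun z => f (α * z) mp) :=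
        (hf.1 mp).1.comp (differentiable_id.const_mul α)
      exact (this.const_mul _).differentiableOn.analyticOnNhd isOpen_univ
    have hfr : ∃ᶠ z in nhdsWithin (0 : ℂ) {0}ᶜ,
        f (-α⁻¹ * z) mm = a / b * f (α * z) mp := by
      have ht : Filter.Tendsto (fun x : ℝ => (x : ℂ)) (nhdsWithin (0 : ℝ) {0}ᶜ)
          (nhdsWithin (0 : ℂ) {0}ᶜ) := by
        refine tendsto_nhdsWithin_iff.2 ⟨?_, ?_⟩
        · have : Filter.Tendsto (fun x : ℝ => (x : ℂ)) (nhds 0) (nhds 0) := by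
            simpa using Complex.continuous_ofReal.tendsto 0
          exact this.mono_left nhdsWithin_le_nhds
        · filter_upwards [self_mem_nhdsWithin] with x hx
          simpa using hx
      exact ht.frequently (Filter.Frequently.of_forall hreal)
    exact congrFun (an1.eq_of_frequently_eq an2 hfr) z
  · rintro ⟨γ, hγ⟩
    have h3 := fun x => (dm x).1
    have h4 := fun x => (dm x).2
    simp only [qm] at h4
    have hrefl : ∀ x : ℝ, f (-α⁻¹ * ((-x : ℝ) : ℂ)) mm = f (α⁻¹ * x) mm := by
      intro x
      congr 1
      push_cast
      ring
    have hder : deriv (fun x : ℝ => f (-α⁻¹ * x) mm) =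
        fun x : ℝ => -α⁻¹ * deriv (fun w => f w mm) (-α⁻¹ * x) := funext fun x => (h3 x).deriv
    have hcont : Continuous (fun x : ℝ => f (-α⁻¹ * x) mm) :=
      continuous_iff_continuousAt.2 fun x => (h3 x).continuousAt
    refine ⟨fun x : ℝ => f (-α⁻¹ * x) mm, ?_, ?_, ?_, ?_⟩
    · intro h0
      have := congrFun h0 (-Rm)
      simp only [hrefl] at this
      exact (hm Rm le_rfl).1 this
    · have hd : Differentiable ℂ (fun z => f (-α⁻¹ * z) mm) :=
        (hf.1 mm).1.comp (differentiable_id.const_mul (-α⁻¹))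
      have hcd : ContDiff ℂ 2 (fun z => f (-α⁻¹ * z) mm) := hd.contDiff
      exact (hcd.restrict_scalars ℝ).comp Complex.ofRealCLM.contDiff
    · have hcn : Continuous (fun x : ℝ => ‖f (-α⁻¹ * x) mm‖ ^ 2) := hcont.norm.pow 2
      have hloc : LocallyIntegrable (fun x : ℝ => ‖f (-α⁻¹ * x) mm‖ ^ 2) :=
        hcn.locallyIntegrable
      have iR : IntegrableOn (fun x : ℝ => ‖f (-α⁻¹ * x) mm‖ ^ 2) (Set.Ioi Rp) := by
        refine Integrable.mono' (integrable_exp_sq (‖γ‖ * Cp) cp Rp hcp)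
          hcn.aestronglyMeasurable ?_
        refine (ae_restrict_iff' measurableSet_Ioi).2 (Filter.Eventually.of_forall fun y hy => ?_)
        rw [Real.norm_of_nonneg (by positivity), hγ, norm_mul, mul_assoc]
        have := (hp y (le_of_lt hy)).2.1
        gcongr
      have iL' : IntegrableOn (fun x : ℝ => ‖f (α⁻¹ * x) mm‖ ^ 2) (Set.Ioi Rm) := by
        refine Integrable.mono' (integrable_exp_sq Cm cm Rm hcm) ?_ ?_
        · have := hcn.comp continuous_neg
          simp only [Function.comp_def, hrefl] at this
          exact this.aestronglyMeasurable
        refine (ae_restrict_iff' measurableSet_Ioi).2 (Filter.Eventually.of_forall fun y hy => ?_)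
        rw [Real.norm_of_nonneg (by positivity)]
        have := (hm y (le_of_lt hy)).2.1
        gcongr
      have iL : IntegrableOn (fun x : ℝ => ‖f (-α⁻¹ * x) mm‖ ^ 2) (Set.Iio (-Rm)) := by
        have iL'' : IntegrableOn (fun x : ℝ => ‖f (α⁻¹ * x) mm‖ ^ 2) (Set.Ioi (-(-Rm))) := by
          simpa using iL'
        have := iL''.comp_neg_Iio
        refine this.congr (Filter.Eventually.of_forall fun x => ?_)
        simp
      have iM : IntegrableOn (fun x : ℝ => ‖f (-α⁻¹ * x) mm‖ ^ 2) (Set.Icc (-Rm) Rp) :=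
        hcn.continuousOn.integrableOn_Icc
      rw [← integrableOn_univ]
      refine ((iL.union iM).union iR).mono_set fun x _ => ?_
      rcases lt_or_ge x (-Rm) with h | h
      · exact Or.inl (Or.inl h)
      · rcases le_or_gt x Rp with h' | h'
        · exact Or.inl (Or.inr ⟨h, h'⟩)
        · exact Or.inr h'
    · intro x
      rw [hder, (h4 x).deriv]
      ring
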